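/- arXiv:1802.08163 — 2 statements merged into one kernel-verified Lean document; each statement's English description precedes it below -/
import Mathlib

section
/- Let z₁ < z₂ < ⋯ < z_K be real numbers with K ≥ 2 and let Π_C be the associated Cramér projection. Then for any probability measure ν on ℝ whose cumulative distribution function F_ν satisfies ∫_{−∞}^0 F_ν(x)² dx < ∞ and ∫_0^∞ (1−F_ν(x))² dx < ∞, and for every probability measure μ supported on {z₁,…,z_K}, one has ℓ₂(ν, Π_C ν) ≤ ℓ₂(ν, μ); that is, Π_C ν minimises the Cramér distance to ν over all probability measures supported on the grid {z₁,…,z_K}. -/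
open MeasureTheory Filter Set

noncomputable section

/-- The cumulative distribution function of a measure on ℝ. -/
def cdfFn (ν : Measure ℝ) (y : ℝ) : ℝ := (ν (Set.Iic y)).toReal

/-- The Cramér distance `ℓ₂` between two measures on ℝ. -/
def cramerDist (ν₁ ν₂ : Measure ℝ) : ℝ :=
  Real.sqrt (∫ x, (cdfFn ν₁ x - cdfFn ν₂ x) ^ 2)

/-- The hat functions associated with the grid `z 0 < z 1 < ⋯ < z (K-1)`. -/
def hatFn (K : ℕ) (z : ℕ → ℝ) (i : ℕ) (x : ℝ) : ℝ :=
  if i = 0 ∧ x ≤ z 0 then 1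
  else if i = K - 1 ∧ z (K - 1) ≤ x then 1
  else if i + 1 < K ∧ z i ≤ x ∧ x ≤ z (i + 1) then (z (i + 1) - x) / (z (i + 1) - z i)
  else if 0 < i ∧ z (i - 1) ≤ x ∧ x ≤ z i then (x - z (i - 1)) / (z i - z (i - 1))
  else 0

/-- The Cramér projection onto the grid `z 0 < z 1 < ⋯ < z (K-1)`. -/
def cramerProj (K : ℕ) (z : ℕ → ℝ) (ν : Measure ℝ) : Measure ℝ :=
  ∑ i ∈ Finset.range K, (ENNReal.ofReal (∫ w, hatFn K z i w ∂ν)) • Measure.dirac (z i)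

/-- The distributional Bellman operator. -/
def bellmanOp {X A : Type} [Fintype X] [Fintype A] [MeasurableSpace X] [MeasurableSpace A]
    (γ : ℝ) (p : X × A → Measure (ℝ × X)) (pol : X → Measure A)
    (η : X × A → Measure ℝ) (xa : X × A) : Measure ℝ :=
  (p xa).bind (fun rx' => ∑ a' : A, (pol rx'.2 {a'}) • (η (rx'.2, a')).map (fun t => rx'.1 + γ * t))

/-- The supremum-Cramér metric between return distribution functions. -/
def supCramer {X A : Type} [Fintype X] [Fintype A] (η μ : X × A → Measure ℝ) : ℝ :=
  ⨆ xa : X × A, cramerDist (η xa) (μ xa)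

/-- Square-integrable tails of the CDF. -/
def sqIntTails (ν : Measure ℝ) : Prop :=
  IntegrableOn (fun x => (cdfFn ν x) ^ 2) (Set.Iic 0) ∧
  IntegrableOn (fun x => (1 - cdfFn ν x) ^ 2) (Set.Ici 0)

/-!
The cumulative distribution function of a probability measure carried by the grid vanishes left of
the grid, equals `1` right of it, and is constant on each cell `[z k, z (k + 1))`. Integrating a
function against `Π_C ν` is integrating its piecewise linear interpolant against `ν`; applied to
`w ↦ z (k + 1) - max (z k) (min (z (k + 1)) w)`, whose integral is the integral of the distribution
function over a cell and which is its own interpolant, this shows that `F_ν` and `F_{Π_C ν}` have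
the same mean on every cell. So `F_{Π_C ν}` is the `L²`-orthogonal projection of `F_ν`, and the
Pythagorean identity `ℓ₂(ν, μ)² = ℓ₂(ν, Π_C ν)² + ℓ₂(Π_C ν, μ)²` holds.
-/

section Cdf

variable {μ ρ : Measure ℝ} {x y : ℝ}

lemma cdfFn_nonneg (μ : Measure ℝ) (x : ℝ) : 0 ≤ cdfFn μ x := ENNReal.toReal_nonneg

lemma cdfFn_le_one (μ : Measure ℝ) [IsProbabilityMeasure μ] (x : ℝ) : cdfFn μ x ≤ 1 :=
  measureReal_le_one

lemma monotone_cdfFn (μ : Measure ℝ) [IsFiniteMeasure μ] : Monotone (cdfFn μ) :=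
  fun _ _ hxy ↦ measureReal_mono (Iic_subset_Iic.mpr hxy)

lemma cdfFn_eq_zero_of_ae_lt (h : ∀ᵐ w ∂μ, x < w) : cdfFn μ x = 0 := by
  have hnull : μ (Iic x) = 0 := measure_eq_zero_iff_ae_notMem.mpr (h.mono fun _ ↦ not_le.mpr)
  rw [cdfFn, hnull, ENNReal.toReal_zero]

lemma cdfFn_eq_one_of_ae_le [IsProbabilityMeasure μ] (h : ∀ᵐ w ∂μ, w ≤ x) : cdfFn μ x = 1 := by
  have hfull : μ (Iic x) = 1 := (mem_ae_iff_prob_eq_one measurableSet_Iic).mp h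
  rw [cdfFn, hfull, ENNReal.toReal_one]

lemma cdfFn_eq_cdfFn_of_notMem_Ico [IsProbabilityMeasure μ] [IsProbabilityMeasure ρ] {a b : ℝ}
    (hρ : ∀ᵐ w ∂ρ, w ∈ Icc a b) (hμ : ∀ᵐ w ∂μ, w ∈ Icc a b) (hx : x ∉ Ico a b) :
    cdfFn ρ x = cdfFn μ x := by
  rcases lt_or_ge x a with hxa | hax
  · rw [cdfFn_eq_zero_of_ae_lt (hρ.mono fun _ hw ↦ hxa.trans_le hw.1),
      cdfFn_eq_zero_of_ae_lt (hμ.mono fun _ hw ↦ hxa.trans_le hw.1)]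
  · have hbx : b ≤ x := not_lt.mp fun hxb ↦ hx ⟨hax, hxb⟩
    rw [cdfFn_eq_one_of_ae_le (hρ.mono fun _ hw ↦ hw.2.trans hbx),
      cdfFn_eq_one_of_ae_le (hμ.mono fun _ hw ↦ hw.2.trans hbx)]

lemma cdfFn_eq_of_ae_notMem_Ioc (hxy : x ≤ y) (h : ∀ᵐ w ∂μ, w ∉ Ioc x y) :
    cdfFn μ x = cdfFn μ y := by
  refine congrArg ENNReal.toReal (measure_congr ?_)
  filter_upwards [h] with w hw
  exact propext ⟨fun hwx ↦ le_trans hwx hxy, fun hwy ↦ not_lt.mp fun hxw ↦ hw ⟨hxw, hwy⟩⟩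

lemma intervalIntegral_cdfFn (μ : Measure ℝ) [IsFiniteMeasure μ] {a b : ℝ} (hab : a ≤ b) :
    ∫ x in a..b, cdfFn μ x = ∫ w, (b - max a (min b w)) ∂μ := by
  have hnonneg (w : ℝ) : 0 ≤ b - max a (min b w) := by simp [hab]
  have hle (w : ℝ) : b - max a (min b w) ≤ b - a :=
    sub_le_sub_left (le_max_left _ _) _
  have hint : Integrable (fun w ↦ b - max a (min b w)) μ :=
    .of_bound (by fun_prop) (b - a) <| ae_of_all _ fun w ↦ by
      rw [Real.norm_of_nonneg (hnonneg w)]; exact hle w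
  have hsuper {t : ℝ} (ht : t ∈ Ioc 0 (b - a)) :
      {w | t ≤ b - max a (min b w)} = Iic (b - t) := by
    ext w
    obtain ⟨htpos, htle⟩ := ht
    simp only [mem_ofPred_eq, mem_Iic]
    grind
  -- The layer cake formula, with `b - t` as the variable of integration.
  calc ∫ x in a..b, cdfFn μ x
      = ∫ t in (0 : ℝ)..(b - a), cdfFn μ (b - t) := by
        rw [intervalIntegral.integral_comp_sub_left, sub_sub_cancel, sub_zero]
    _ = ∫ t in Ioc 0 (b - a), μ.real {w | t ≤ b - max a (min b w)} := by
        rw [intervalIntegral.integral_of_le (sub_nonneg.mpr hab)]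
        exact setIntegral_congr_fun measurableSet_Ioc fun t ht ↦ by
          rw [hsuper ht]; rfl
    _ = ∫ w, (b - max a (min b w)) ∂μ :=
        (hint.integral_eq_integral_Ioc_meas_le (ae_of_all _ hnonneg) (ae_of_all _ hle)).symm

end Cdf

section CramerDist

variable {ν ρ μ : Measure ℝ}

lemma memLp_cdfFn_sub [IsFiniteMeasure ν] [IsFiniteMeasure ρ] (hν : sqIntTails ν)
    (hρ : sqIntTails ρ) : MemLp (fun x ↦ cdfFn ν x - cdfFn ρ x) 2 volume := by
  have hmeasν := (monotone_cdfFn ν).measurable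
  have hmeasρ := (monotone_cdfFn ρ).measurable
  have hleft : MemLp (fun x ↦ cdfFn ν x - cdfFn ρ x) 2 (volume.restrict (Iic 0)) :=
    ((memLp_two_iff_integrable_sq hmeasν.aestronglyMeasurable).mpr hν.1).sub
      ((memLp_two_iff_integrable_sq hmeasρ.aestronglyMeasurable).mpr hρ.1)
  have hright : MemLp (fun x ↦ cdfFn ν x - cdfFn ρ x) 2 (volume.restrict (Ici 0)) := by
    have hν' : MemLp (fun x ↦ 1 - cdfFn ν x) 2 (volume.restrict (Ici 0)) :=
      (memLp_two_iff_integrable_sq (by fun_prop)).mpr hν.2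
    have hρ' : MemLp (fun x ↦ 1 - cdfFn ρ x) 2 (volume.restrict (Ici 0)) :=
      (memLp_two_iff_integrable_sq (by fun_prop)).mpr hρ.2
    simpa [Pi.sub_def] using hρ'.sub hν'
  have hmeas : AEStronglyMeasurable (fun x ↦ cdfFn ν x - cdfFn ρ x) volume := by fun_prop
  rw [memLp_two_iff_integrable_sq hmeas, ← integrableOn_univ, ← Iic_union_Ici (a := (0 : ℝ))]
  exact .union ((memLp_two_iff_integrable_sq hmeas.restrict).mp hleft)
    ((memLp_two_iff_integrable_sq hmeas.restrict).mp hright)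

lemma cramerDist_sq (ν ρ : Measure ℝ) :
    cramerDist ν ρ ^ 2 = ∫ x, (cdfFn ν x - cdfFn ρ x) ^ 2 :=
  Real.sq_sqrt (integral_nonneg fun _ ↦ sq_nonneg _)

lemma cramerDist_sq_eq_add_of_integral_mul_eq_zero [IsFiniteMeasure ν] [IsFiniteMeasure ρ]
    [IsFiniteMeasure μ] (hν : sqIntTails ν) (hρ : sqIntTails ρ) (hμ : sqIntTails μ)
    (horth : ∫ x, (cdfFn ν x - cdfFn ρ x) * (cdfFn ρ x - cdfFn μ x) = 0) :
    cramerDist ν μ ^ 2 = cramerDist ν ρ ^ 2 + cramerDist ρ μ ^ 2 := by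
  have hνρ := memLp_cdfFn_sub hν hρ
  have hρμ := memLp_cdfFn_sub hρ hμ
  have hmul : Integrable fun x ↦ (cdfFn ν x - cdfFn ρ x) * (cdfFn ρ x - cdfFn μ x) :=
    hνρ.integrable_mul hρμ
  calc cramerDist ν μ ^ 2
      = ∫ x, ((cdfFn ν x - cdfFn ρ x) ^ 2 + (cdfFn ρ x - cdfFn μ x) ^ 2
          + 2 * ((cdfFn ν x - cdfFn ρ x) * (cdfFn ρ x - cdfFn μ x))) := by
        rw [cramerDist_sq]; congr with x; ring
    _ = cramerDist ν ρ ^ 2 + cramerDist ρ μ ^ 2 := by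
        rw [integral_add (by exact hνρ.integrable_sq.add hρμ.integrable_sq) (hmul.const_mul 2),
          integral_add hνρ.integrable_sq hρμ.integrable_sq, integral_const_mul, horth,
          cramerDist_sq, cramerDist_sq, mul_zero, add_zero]

lemma sqIntTails_of_ae_mem_Icc [IsProbabilityMeasure μ] {a b : ℝ} (h : ∀ᵐ w ∂μ, w ∈ Icc a b) :
    sqIntTails μ := by
  have hmeas := (monotone_cdfFn μ).measurable
  have hzero {x : ℝ} (hx : x < a) : cdfFn μ x = 0 :=
    cdfFn_eq_zero_of_ae_lt (h.mono fun _ hw ↦ hx.trans_le hw.1)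
  have hone {x : ℝ} (hx : b ≤ x) : cdfFn μ x = 1 :=
    cdfFn_eq_one_of_ae_le (h.mono fun _ hw ↦ hw.2.trans hx)
  constructor
  · have hbdd : IntegrableOn (fun x ↦ cdfFn μ x ^ 2) (Icc a 0) :=
      .of_bound measure_Icc_lt_top (by fun_prop) 1 <| ae_of_all _ fun x ↦ by
        rw [Real.norm_of_nonneg (sq_nonneg _)]
        exact pow_le_one₀ (cdfFn_nonneg μ x) (cdfFn_le_one μ x)
    refine hbdd.of_forall_sdiff_eq_zero measurableSet_Iic fun x hx ↦ ?_
    rw [hzero (not_le.mp fun hax ↦ hx.2 ⟨hax, hx.1⟩), zero_pow two_ne_zero]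
  · have hbdd : IntegrableOn (fun x ↦ (1 - cdfFn μ x) ^ 2) (Icc 0 b) :=
      .of_bound measure_Icc_lt_top (by fun_prop) 1 <| ae_of_all _ fun x ↦ by
        rw [Real.norm_of_nonneg (sq_nonneg _)]
        exact pow_le_one₀ (sub_nonneg.mpr (cdfFn_le_one μ x)) (sub_le_self _ (cdfFn_nonneg μ x))
    refine hbdd.of_forall_sdiff_eq_zero measurableSet_Ici fun x hx ↦ ?_
    rw [hone (not_le.mp fun hxb ↦ hx.2 ⟨hx.1, hxb⟩).le, sub_self, zero_pow two_ne_zero]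

end CramerDist

section Hat

variable {n k : ℕ} {z : ℕ → ℝ} {w : ℝ}

lemma node_lt_node_succ (hz : StrictMonoOn z (Iic n)) (hk : k < n) : z k < z (k + 1) :=
  hz hk.le (Nat.succ_le_of_lt hk) k.lt_succ_self

lemma hatFn_mem_Icc (K : ℕ) (z : ℕ → ℝ) (i : ℕ) (w : ℝ) : hatFn K z i w ∈ Icc 0 1 := by
  unfold hatFn
  split_ifs with _ _ hdesc hasc
  · simp
  · simp
  · exact ⟨div_nonneg (by linarith) (by linarith), div_le_one_of_le₀ (by linarith) (by linarith)⟩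
  · exact ⟨div_nonneg (by linarith) (by linarith), div_le_one_of_le₀ (by linarith) (by linarith)⟩
  · simp

lemma measurable_hatFn (K : ℕ) (z : ℕ → ℝ) (i : ℕ) : Measurable (hatFn K z i) := by
  refine .ite ?_ measurable_const <| .ite ?_ measurable_const <|
    .ite ?_ (by fun_prop) <| .ite ?_ (by fun_prop) measurable_const
  · exact (MeasurableSet.const _).inter measurableSet_Iic
  · exact (MeasurableSet.const _).inter measurableSet_Ici
  · exact (MeasurableSet.const _).inter measurableSet_Icc
  · exact (MeasurableSet.const _).inter measurableSet_Icc

lemma integrable_hatFn (K : ℕ) (z : ℕ → ℝ) (i : ℕ) (ν : Measure ℝ) [IsFiniteMeasure ν] :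
    Integrable (hatFn K z i) ν :=
  .of_bound (measurable_hatFn K z i).aestronglyMeasurable 1 <| ae_of_all _ fun w ↦ by
    rw [Real.norm_of_nonneg (hatFn_mem_Icc K z i w).1]; exact (hatFn_mem_Icc K z i w).2

lemma hatFn_zero_of_le (K : ℕ) (hw : w ≤ z 0) : hatFn K z 0 w = 1 := by
  simp [hatFn, hw]

lemma hatFn_last_of_ge (n : ℕ) (hw : z n ≤ w) : hatFn (n + 1) z n w = 1 := by
  simp [hatFn, hw]

lemma hatFn_of_mem_Icc (hz : z k < z (k + 1)) (hk : k < n) (hw : w ∈ Icc (z k) (z (k + 1))) :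
    hatFn (n + 1) z k w = (z (k + 1) - w) / (z (k + 1) - z k) := by
  have hself := div_self (sub_pos.mpr hz).ne'
  grind [hatFn]

lemma hatFn_succ_of_mem_Icc (hz : StrictMonoOn z (Iic n)) (hk : k < n)
    (hw : w ∈ Icc (z k) (z (k + 1))) :
    hatFn (n + 1) z (k + 1) w = (w - z k) / (z (k + 1) - z k) := by
  have hself := div_self (sub_pos.mpr (node_lt_node_succ hz hk)).ne'
  have hnext (hk' : k + 1 < n) : (z (k + 2) - z (k + 1)) / (z (k + 2) - z (k + 1)) = 1 :=
    div_self (sub_pos.mpr (node_lt_node_succ hz hk')).ne'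
  grind [hatFn]

lemma hatFn_succ_eq_zero_of_le (K : ℕ) (hz : z k < z (k + 1)) (hw : w ≤ z k) :
    hatFn K z (k + 1) w = 0 := by
  grind [hatFn]

lemma hatFn_eq_zero_of_ge (hz : z k < z (k + 1)) (hk : k < n) (hw : z (k + 1) ≤ w) :
    hatFn (n + 1) z k w = 0 := by
  grind [hatFn]

end Hat

section Interpolation

variable {n k : ℕ} {z : ℕ → ℝ} {f : ℝ → ℝ} {w : ℝ}

/-- The piecewise linear interpolant of `f` at the nodes `z 0, …, z n`, extended by constants
outside `[z 0, z n]`. It is the operation on test functions dual to the Cramér projection. -/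
def gridInterp (n : ℕ) (z : ℕ → ℝ) (f : ℝ → ℝ) (w : ℝ) : ℝ :=
  ∑ i ∈ Finset.range (n + 1), hatFn (n + 1) z i w * f (z i)

/-- `f` is affine on each cell of the grid `z 0, …, z n` and constant on both sides of the grid;
these are the functions that agree with their interpolant `gridInterp n z f`. The cells are closed,
so such a function is continuous at the nodes. -/
structure IsGridAffine (n : ℕ) (z : ℕ → ℝ) (f : ℝ → ℝ) : Prop where
  left : ∀ w ≤ z 0, f w = f (z 0)
  affine : ∀ k < n, ∃ c d, ∀ w ∈ Icc (z k) (z (k + 1)), f w = c * w + d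
  right : ∀ w, z n ≤ w → f w = f (z n)

lemma gridInterp_of_le (hz : StrictMonoOn z (Iic n)) (f : ℝ → ℝ) (hw : w ≤ z 0) :
    gridInterp n z f w = f (z 0) := by
  rw [gridInterp, Finset.sum_range_succ', hatFn_zero_of_le _ hw, one_mul, add_eq_right]
  refine Finset.sum_eq_zero fun i hi ↦ ?_
  have hin := Finset.mem_range.mp hi
  have hwi : w ≤ z i := hw.trans (hz.monotoneOn n.zero_le hin.le i.zero_le)
  rw [hatFn_succ_eq_zero_of_le _ (node_lt_node_succ hz hin) hwi, zero_mul]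

lemma gridInterp_of_ge (hz : StrictMonoOn z (Iic n)) (f : ℝ → ℝ) (hw : z n ≤ w) :
    gridInterp n z f w = f (z n) := by
  rw [gridInterp, Finset.sum_range_succ, hatFn_last_of_ge _ hw, one_mul, add_eq_right]
  refine Finset.sum_eq_zero fun i hi ↦ ?_
  have hin := Finset.mem_range.mp hi
  have hwi : z (i + 1) ≤ w := (hz.monotoneOn hin self_mem_Iic hin).trans hw
  rw [hatFn_eq_zero_of_ge (node_lt_node_succ hz hin) hin hwi, zero_mul]

lemma gridInterp_of_mem_Icc (hz : StrictMonoOn z (Iic n)) (f : ℝ → ℝ) (hk : k < n)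
    (hw : w ∈ Icc (z k) (z (k + 1))) :
    gridInterp n z f w = (z (k + 1) - w) / (z (k + 1) - z k) * f (z k)
      + (w - z k) / (z (k + 1) - z k) * f (z (k + 1)) := by
  have hlt := node_lt_node_succ hz hk
  rw [gridInterp, Finset.sum_eq_add_of_mem k (k + 1) (Finset.mem_range.mpr (by lia))
    (Finset.mem_range.mpr (by lia)) k.lt_succ_self.ne, hatFn_of_mem_Icc hlt hk hw,
    hatFn_succ_of_mem_Icc hz hk hw]
  rintro i hi ⟨hik, hik'⟩
  have hin := Finset.mem_range_succ_iff.mp hi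
  rcases hik.lt_or_gt with hik | hki
  · have hwi : z (i + 1) ≤ w := (hz.monotoneOn (hik.trans hk) hk.le hik).trans hw.1
    rw [hatFn_eq_zero_of_ge (node_lt_node_succ hz (hik.trans hk)) (hik.trans hk) hwi, zero_mul]
  · obtain ⟨j, rfl⟩ := Nat.exists_eq_add_one_of_ne_zero (Nat.ne_zero_of_lt hki)
    have hwj : w ≤ z j := hw.2.trans (hz.monotoneOn (Nat.succ_le_of_lt hk)
      (Nat.le_of_succ_le hin) (by lia))
    rw [hatFn_succ_eq_zero_of_le _ (node_lt_node_succ hz hin) hwj, zero_mul]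

lemma IsGridAffine.gridInterp_eq (hz : StrictMonoOn z (Iic n)) (hf : IsGridAffine n z f) :
    gridInterp n z f = f := by
  ext w
  rcases lt_or_ge w (z 0) with hw0 | hw0
  · rw [gridInterp_of_le hz f hw0.le, hf.left w hw0.le]
  rcases le_or_gt (z n) w with hwn | hwn
  · rw [gridInterp_of_ge hz f hwn, hf.right w hwn]
  obtain ⟨k, hkn, hwk⟩ : ∃ k < n, w ∈ Ico (z k) (z (k + 1)) := by
    simpa [and_left_comm] using Ico_subset_biUnion_Ico n z ⟨hw0, hwn⟩
  have hlt := node_lt_node_succ hz hkn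
  have hwk := Ico_subset_Icc_self hwk
  obtain ⟨c, d, hcd⟩ := hf.affine k hkn
  rw [gridInterp_of_mem_Icc hz f hkn hwk, hcd w hwk, hcd _ (left_mem_Icc.mpr hlt.le),
    hcd _ (right_mem_Icc.mpr hlt.le)]
  have hne : z (k + 1) - z k ≠ 0 := (sub_pos.mpr hlt).ne'
  field_simp
  ring

lemma isGridAffine_const (n : ℕ) (z : ℕ → ℝ) (c : ℝ) : IsGridAffine n z fun _ ↦ c where
  left _ _ := rfl
  affine _ _ := ⟨0, c, fun _ _ ↦ by ring⟩
  right _ _ := rfl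

lemma isGridAffine_sub_clamp (hz : StrictMonoOn z (Iic n)) (hk : k < n) :
    IsGridAffine n z fun w ↦ z (k + 1) - max (z k) (min (z (k + 1)) w) := by
  have hlt := node_lt_node_succ hz hk
  have hbelow {x : ℝ} (hx : x ≤ z k) : max (z k) (min (z (k + 1)) x) = z k := by
    rw [min_eq_right (hx.trans hlt.le), max_eq_left hx]
  have habove {x : ℝ} (hx : z (k + 1) ≤ x) : max (z k) (min (z (k + 1)) x) = z (k + 1) := by
    rw [min_eq_left hx, max_eq_right hlt.le]
  refine ⟨fun w hw ↦ ?_, fun j hj ↦ ?_, fun w hw ↦ ?_⟩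
  · have h0k : z 0 ≤ z k := hz.monotoneOn n.zero_le hk.le k.zero_le
    rw [hbelow (hw.trans h0k), hbelow h0k]
  · rcases lt_trichotomy j k with hjk | rfl | hkj
    · refine ⟨0, z (k + 1) - z k, fun w hw ↦ ?_⟩
      rw [hbelow (hw.2.trans (hz.monotoneOn hj hk.le hjk)), zero_mul, zero_add]
    · refine ⟨-1, z (j + 1), fun w hw ↦ ?_⟩
      rw [min_eq_right hw.2, max_eq_right hw.1]
      ring
    · refine ⟨0, 0, fun w hw ↦ ?_⟩
      rw [habove ((hz.monotoneOn hk hj.le hkj).trans hw.1), sub_self, zero_mul, zero_add]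
  · have hkn : z (k + 1) ≤ z n := hz.monotoneOn hk self_mem_Iic hk
    rw [habove (hkn.trans hw), habove hkn]

end Interpolation

section CramerProj

variable {n k : ℕ} {z : ℕ → ℝ} {f : ℝ → ℝ}

lemma integral_cramerProj (n : ℕ) (z : ℕ → ℝ) (ν : Measure ℝ) [IsFiniteMeasure ν] (f : ℝ → ℝ) :
    ∫ w, f w ∂cramerProj (n + 1) z ν = ∫ w, gridInterp n z f w ∂ν := by
  have hdirac (i : ℕ) : Integrable f
      (ENNReal.ofReal (∫ w, hatFn (n + 1) z i w ∂ν) • Measure.dirac (z i)) :=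
    (integrable_dirac (by simp)).smul_measure ENNReal.ofReal_ne_top
  have hweight (i : ℕ) : 0 ≤ ∫ w, hatFn (n + 1) z i w ∂ν :=
    integral_nonneg fun w ↦ (hatFn_mem_Icc _ z i w).1
  simp only [gridInterp]
  rw [cramerProj, integral_finsetSum_measure fun i _ ↦ hdirac i,
    integral_finsetSum _ fun i _ ↦ (integrable_hatFn _ z i ν).mul_const _]
  refine Finset.sum_congr rfl fun i _ ↦ ?_
  rw [integral_smul_measure, integral_dirac, ENNReal.toReal_ofReal (hweight i), smul_eq_mul,
    integral_mul_const]

lemma IsGridAffine.integral_cramerProj (hz : StrictMonoOn z (Iic n)) (hf : IsGridAffine n z f)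
    (ν : Measure ℝ) [IsFiniteMeasure ν] :
    ∫ w, f w ∂cramerProj (n + 1) z ν = ∫ w, f w ∂ν := by
  rw [_root_.integral_cramerProj, hf.gridInterp_eq hz]

instance isFiniteMeasure_cramerProj (K : ℕ) (z : ℕ → ℝ) (ν : Measure ℝ) :
    IsFiniteMeasure (cramerProj K z ν) := by
  constructor
  simp [cramerProj, Measure.finsetSum_apply]

lemma isProbabilityMeasure_cramerProj (hz : StrictMonoOn z (Iic n)) (ν : Measure ℝ)
    [IsProbabilityMeasure ν] : IsProbabilityMeasure (cramerProj (n + 1) z ν) := by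
  have hmass : (cramerProj (n + 1) z ν).real univ = 1 := by
    simpa using (isGridAffine_const n z 1).integral_cramerProj hz ν
  exact ⟨(ENNReal.toReal_eq_one_iff _).mp hmass⟩

lemma ae_mem_grid_cramerProj (K : ℕ) (z : ℕ → ℝ) (ν : Measure ℝ) :
    ∀ᵐ w ∂cramerProj K z ν, ∃ i < K, w = z i := by
  rw [ae_iff, cramerProj, Measure.finsetSum_apply]
  refine Finset.sum_eq_zero fun i hi ↦ ?_
  have hmem : z i ∉ {w | ¬∃ i < K, w = z i} := not_not.mpr ⟨i, Finset.mem_range.mp hi, rfl⟩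
  rw [Measure.smul_apply, Measure.dirac_apply, indicator_of_notMem hmem, smul_zero]

lemma intervalIntegral_cdfFn_cramerProj (hz : StrictMonoOn z (Iic n)) (ν : Measure ℝ)
    [IsFiniteMeasure ν] (hk : k < n) :
    ∫ x in z k..z (k + 1), cdfFn (cramerProj (n + 1) z ν) x
      = ∫ x in z k..z (k + 1), cdfFn ν x := by
  have hle : z k ≤ z (k + 1) := (node_lt_node_succ hz hk).le
  rw [intervalIntegral_cdfFn _ hle, intervalIntegral_cdfFn _ hle,
    (isGridAffine_sub_clamp hz hk).integral_cramerProj hz]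

end CramerProj

section GridMeasure

variable {n k : ℕ} {z : ℕ → ℝ} {ν ρ μ : Measure ℝ} {x : ℝ}

lemma ae_mem_Icc_of_ae_mem_grid (hz : StrictMonoOn z (Iic n))
    (hμ : ∀ᵐ w ∂μ, ∃ i < n + 1, w = z i) : ∀ᵐ w ∂μ, w ∈ Icc (z 0) (z n) := by
  filter_upwards [hμ] with w ⟨i, hi, hw⟩
  have hin := Nat.le_of_lt_succ hi
  exact hw ▸ ⟨hz.monotoneOn n.zero_le hin i.zero_le, hz.monotoneOn hin self_mem_Iic hin⟩

lemma cdfFn_eq_of_mem_cell (hz : StrictMonoOn z (Iic n))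
    (hμ : ∀ᵐ w ∂μ, ∃ i < n + 1, w = z i) (hk : k < n) (hx : x ∈ Ico (z k) (z (k + 1))) :
    cdfFn μ x = cdfFn μ (z k) := by
  refine (cdfFn_eq_of_ae_notMem_Ioc hx.1 ?_).symm
  filter_upwards [hμ] with w ⟨i, hi, hw⟩ ⟨hkw, hwx⟩
  subst hw
  have hin := Nat.le_of_lt_succ hi
  have hki : k < i := (hz.lt_iff_lt hk.le hin).mp hkw
  have hik : i < k + 1 := (hz.lt_iff_lt hin (Nat.succ_le_of_lt hk)).mp (hwx.trans_lt hx.2)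
  lia

lemma integral_cell_cdfFn_mul_eq_zero [IsFiniteMeasure ν] [IsFiniteMeasure ρ]
    (hz : StrictMonoOn z (Iic n)) (hρ : ∀ᵐ w ∂ρ, ∃ i < n + 1, w = z i)
    (hμ : ∀ᵐ w ∂μ, ∃ i < n + 1, w = z i) (hk : k < n)
    (hmean : ∫ x in z k..z (k + 1), cdfFn ρ x = ∫ x in z k..z (k + 1), cdfFn ν x) :
    ∫ x in z k..z (k + 1), (cdfFn ν x - cdfFn ρ x) * (cdfFn ρ x - cdfFn μ x) = 0 := by
  have hle : z k ≤ z (k + 1) := (node_lt_node_succ hz hk).le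
  calc ∫ x in z k..z (k + 1), (cdfFn ν x - cdfFn ρ x) * (cdfFn ρ x - cdfFn μ x)
      = ∫ x in z k..z (k + 1), (cdfFn ν x - cdfFn ρ x) * (cdfFn ρ (z k) - cdfFn μ (z k)) := by
        refine intervalIntegral.integral_congr_Ioo_of_le hle fun x hx ↦ ?_
        have hx' := Ioo_subset_Ico_self hx
        simp only [cdfFn_eq_of_mem_cell hz hρ hk hx', cdfFn_eq_of_mem_cell hz hμ hk hx']
    _ = 0 := by
        rw [intervalIntegral.integral_mul_const, intervalIntegral.integral_sub
          (monotone_cdfFn ν).intervalIntegrable (monotone_cdfFn ρ).intervalIntegrable, hmean,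
          sub_self, zero_mul]

lemma integral_cdfFn_mul_eq_zero [IsFiniteMeasure ν] [IsProbabilityMeasure ρ]
    [IsProbabilityMeasure μ] (hz : StrictMonoOn z (Iic n))
    (hρ : ∀ᵐ w ∂ρ, ∃ i < n + 1, w = z i) (hμ : ∀ᵐ w ∂μ, ∃ i < n + 1, w = z i)
    (hmean : ∀ k < n, ∫ x in z k..z (k + 1), cdfFn ρ x = ∫ x in z k..z (k + 1), cdfFn ν x) :
    ∫ x, (cdfFn ν x - cdfFn ρ x) * (cdfFn ρ x - cdfFn μ x) = 0 := by
  have hint (k : ℕ) : IntervalIntegrable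
      (fun x ↦ (cdfFn ν x - cdfFn ρ x) * (cdfFn ρ x - cdfFn μ x)) volume (z k) (z (k + 1)) := by
    have hdiff : IntervalIntegrable (fun x ↦ cdfFn ν x - cdfFn ρ x) volume (z k) (z (k + 1)) :=
      (monotone_cdfFn ν).intervalIntegrable.sub (monotone_cdfFn ρ).intervalIntegrable
    refine intervalIntegrable_iff.mpr <| (intervalIntegrable_iff.mp hdiff).mul_bdd (c := 1)
      ((monotone_cdfFn ρ).measurable.sub (monotone_cdfFn μ).measurable).aestronglyMeasurable ?_
    exact ae_of_all _ fun x ↦ abs_sub_le_of_nonneg_of_le (cdfFn_nonneg ρ x) (cdfFn_le_one ρ x)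
      (cdfFn_nonneg μ x) (cdfFn_le_one μ x)
  calc ∫ x, (cdfFn ν x - cdfFn ρ x) * (cdfFn ρ x - cdfFn μ x)
      = ∫ x in Ico (z 0) (z n), (cdfFn ν x - cdfFn ρ x) * (cdfFn ρ x - cdfFn μ x) :=
        (setIntegral_eq_integral_of_forall_compl_eq_zero fun x hx ↦ by
          rw [cdfFn_eq_cdfFn_of_notMem_Ico (ae_mem_Icc_of_ae_mem_grid hz hρ)
            (ae_mem_Icc_of_ae_mem_grid hz hμ) hx, sub_self, mul_zero]).symm
    _ = ∫ x in z 0..z n, (cdfFn ν x - cdfFn ρ x) * (cdfFn ρ x - cdfFn μ x) := by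
        rw [integral_Ico_eq_integral_Ioc, intervalIntegral.integral_of_le
          (hz.monotoneOn n.zero_le self_mem_Iic n.zero_le)]
    _ = ∑ k ∈ Finset.range n, ∫ x in z k..z (k + 1),
          (cdfFn ν x - cdfFn ρ x) * (cdfFn ρ x - cdfFn μ x) :=
        (intervalIntegral.sum_integral_adjacent_intervals fun k _ ↦ hint k).symm
    _ = 0 := Finset.sum_eq_zero fun k hk ↦
        have hkn := Finset.mem_range.mp hk
        integral_cell_cdfFn_mul_eq_zero hz hρ hμ hkn (hmean k hkn)

end GridMeasure

lemma cramerDist_sq_eq_add_cramerProj {n : ℕ} {z : ℕ → ℝ} (hz : StrictMonoOn z (Iic n))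
    {ν μ : Measure ℝ} [IsProbabilityMeasure ν] [IsProbabilityMeasure μ] (hν : sqIntTails ν)
    (hμ : ∀ᵐ w ∂μ, ∃ i < n + 1, w = z i) :
    cramerDist ν μ ^ 2
      = cramerDist ν (cramerProj (n + 1) z ν) ^ 2 + cramerDist (cramerProj (n + 1) z ν) μ ^ 2 := by
  have := isProbabilityMeasure_cramerProj hz ν
  have hproj := ae_mem_grid_cramerProj (n + 1) z ν
  exact cramerDist_sq_eq_add_of_integral_mul_eq_zero hν
    (sqIntTails_of_ae_mem_Icc (ae_mem_Icc_of_ae_mem_grid hz hproj))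
    (sqIntTails_of_ae_mem_Icc (ae_mem_Icc_of_ae_mem_grid hz hμ))
    (integral_cdfFn_mul_eq_zero hz hproj hμ fun _ hk ↦ intervalIntegral_cdfFn_cramerProj hz ν hk)

/-- The Cramér projection minimises the Cramér distance to ν over all
probability measures supported on the grid. -/
theorem cramerProj_isMinimizer
    (K : ℕ) (hK : 2 ≤ K) (z : ℕ → ℝ) (hz : ∀ i, i + 1 < K → z i < z (i + 1))
    (ν : Measure ℝ) [IsProbabilityMeasure ν] (hν : sqIntTails ν)
    (μ : Measure ℝ) [IsProbabilityMeasure μ] (hμ : μ {w | ∃ i < K, w = z i}ᶜ = 0) :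
    cramerDist ν (cramerProj K z ν) ≤ cramerDist ν μ := by
  obtain ⟨n, rfl⟩ := Nat.exists_eq_add_one_of_ne_zero (Nat.ne_zero_of_lt hK)
  have hmono : StrictMonoOn z (Iic n) :=
    strictMonoOn_Iic_of_lt_succ fun i hi ↦ hz i (Nat.succ_lt_succ hi)
  have hpyth := cramerDist_sq_eq_add_cramerProj hmono hν (mem_ae_iff.mpr hμ)
  refine (sq_le_sq₀ (Real.sqrt_nonneg _) (Real.sqrt_nonneg _)).mp ?_
  exact hpyth ▸ le_add_of_nonneg_right (sq_nonneg _)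

end
end

section
/- Let r ∈ ℝ and γ ∈ (0,1). For the affine map f_{r,γ} : ℝ → ℝ given by f_{r,γ}(t) = r + γt, and for any two probability measures ν₁, ν₂ on ℝ, the Cramér distance satisfies ℓ₂²((f_{r,γ})_# ν₁, (f_{r,γ})_# ν₂) = γ · ℓ₂²(ν₁, ν₂), where (f_{r,γ})_# ν denotes the pushforward of ν under f_{r,γ}. -/
/-!
For `γ > 0` the distribution function of the image of `ν` under `t ↦ r + γ * t` is
`x ↦ F ((x - r) / γ)`, with `F` the one of `ν`, so the substitution `x = r + γ * y` in the integral
produces the factor `γ`. The reflection `t ↦ -t` turns `F` into `x ↦ ν univ - F (-x)` away from the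
countably many atoms; if the two measures have the same mass, this only changes the sign of the
difference of the distribution functions, so the distance is preserved and the case `γ < 0`
follows.
-/

open MeasureTheory Filter Set

noncomputable section

theorem sq_cramerDist (ν₁ ν₂ : Measure ℝ) :
    cramerDist ν₁ ν₂ ^ 2 = ∫ x, (cdfFn ν₁ x - cdfFn ν₂ x) ^ 2 :=
  Real.sq_sqrt (integral_nonneg fun _ => sq_nonneg _)

theorem cramerDist_self (ν : Measure ℝ) : cramerDist ν ν = 0 := by
  simp [cramerDist]

theorem cdfFn_map_affine_of_pos (r : ℝ) {γ : ℝ} (hγ : 0 < γ) (ν : Measure ℝ) (x : ℝ) :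
    cdfFn (ν.map fun t => r + γ * t) x = cdfFn ν ((x - r) / γ) := by
  have preimage_Iic : (fun t => r + γ * t) ⁻¹' Iic x = Iic ((x - r) / γ) := by
    ext t
    simp only [mem_preimage, mem_Iic, le_div_iff₀' hγ, le_sub_iff_add_le']
  rw [cdfFn, Measure.map_apply (by fun_prop) measurableSet_Iic, preimage_Iic, cdfFn]

theorem sq_cramerDist_map_affine_of_pos (r : ℝ) {γ : ℝ} (hγ : 0 < γ) (ν₁ ν₂ : Measure ℝ) :
    cramerDist (ν₁.map fun t => r + γ * t) (ν₂.map fun t => r + γ * t) ^ 2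
      = γ * cramerDist ν₁ ν₂ ^ 2 := by
  let D : ℝ → ℝ := fun x => (cdfFn ν₁ x - cdfFn ν₂ x) ^ 2
  calc cramerDist (ν₁.map fun t => r + γ * t) (ν₂.map fun t => r + γ * t) ^ 2
      = ∫ x, D ((x - r) / γ) := by simp only [sq_cramerDist, cdfFn_map_affine_of_pos r hγ, D]
    _ = ∫ x, D (x / γ) := integral_sub_right_eq_self (fun x => D (x / γ)) r
    _ = γ * ∫ x, D x := by rw [Measure.integral_comp_div, abs_of_pos hγ, smul_eq_mul]
    _ = γ * cramerDist ν₁ ν₂ ^ 2 := by rw [sq_cramerDist]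

theorem ae_measure_singleton_eq_zero {α : Type*} [MeasurableSpace α] [MeasurableSingletonClass α]
    (μ ν : Measure α) [SFinite μ] [NullSingletonClass ν] : ∀ᵐ x ∂ν, μ {x} = 0 := by
  have countable_atoms : {x | 0 < μ {x}}.Countable :=
    Measure.countable_meas_level_set_pos (μ := μ) measurable_id
  filter_upwards [countable_atoms.ae_notMem ν] with x hx
  simpa using hx

theorem cdfFn_map_neg_ae_eq (ν : Measure ℝ) [IsFiniteMeasure ν] :
    cdfFn (ν.map Neg.neg) =ᵐ[volume] fun x => ν.real univ - cdfFn ν (-x) := by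
  have null_atoms : ∀ᵐ x : ℝ, ν {-x} = 0 :=
    (Measure.measurePreserving_neg volume).quasiMeasurePreserving.ae
      (ae_measure_singleton_eq_zero ν volume)
  filter_upwards [null_atoms] with x hx
  calc cdfFn (ν.map Neg.neg) x
      = ν.real (Ici (-x)) := by
        rw [cdfFn, Measure.map_apply measurable_neg measurableSet_Iic, neg_preimage, neg_Iic,
          measureReal_def]
    _ = ν.real (Iic (-x))ᶜ := by rw [compl_Iic, measureReal_congr (Ioi_ae_eq_Ici' hx)]
    _ = ν.real univ - cdfFn ν (-x) := measureReal_compl measurableSet_Iic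

theorem cramerDist_map_neg (ν₁ ν₂ : Measure ℝ) [IsFiniteMeasure ν₁] [IsFiniteMeasure ν₂]
    (h : ν₁ univ = ν₂ univ) :
    cramerDist (ν₁.map Neg.neg) (ν₂.map Neg.neg) = cramerDist ν₁ ν₂ := by
  have sq_sub_ae_eq : (fun x => (cdfFn (ν₁.map Neg.neg) x - cdfFn (ν₂.map Neg.neg) x) ^ 2)
      =ᵐ[volume] fun x => (cdfFn ν₁ (-x) - cdfFn ν₂ (-x)) ^ 2 := by
    filter_upwards [cdfFn_map_neg_ae_eq ν₁, cdfFn_map_neg_ae_eq ν₂] with x hx₁ hx₂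
    rw [hx₁, hx₂, measureReal_def, measureReal_def, h]
    ring
  rw [cramerDist, integral_congr_ae sq_sub_ae_eq,
    integral_neg_eq_self fun x => (cdfFn ν₁ x - cdfFn ν₂ x) ^ 2, cramerDist]

theorem cramerDist_affine_pushforward_general (r γ : ℝ) (ν₁ ν₂ : Measure ℝ)
    [IsFiniteMeasure ν₁] [IsFiniteMeasure ν₂] (h : ν₁ univ = ν₂ univ) :
    cramerDist (ν₁.map fun t => r + γ * t) (ν₂.map fun t => r + γ * t) ^ 2
      = |γ| * cramerDist ν₁ ν₂ ^ 2 := by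
  rcases lt_trichotomy γ 0 with hγ | rfl | hγ
  · have map_affine (ν : Measure ℝ) :
        ν.map (fun t => r + γ * t) = (ν.map Neg.neg).map fun t => r + -γ * t := by
      rw [Measure.map_map (by fun_prop) measurable_neg]
      simp only [Function.comp_def, neg_mul_neg]
    rw [map_affine, map_affine, sq_cramerDist_map_affine_of_pos r (neg_pos.mpr hγ),
      cramerDist_map_neg ν₁ ν₂ h, abs_of_neg hγ]
  · simp [Measure.map_const, h, cramerDist_self]
  · rw [sq_cramerDist_map_affine_of_pos r hγ, abs_of_pos hγ]

/-- The Cramér distance scales by √γ under the affine pushforward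
`f_{r,γ}(t) = r + γ t`. -/
theorem cramerDist_affine_pushforward
    (r : ℝ) (γ : ℝ) (hγ0 : 0 < γ) (hγ1 : γ < 1)
    (ν₁ ν₂ : Measure ℝ) [IsProbabilityMeasure ν₁] [IsProbabilityMeasure ν₂] :
    (cramerDist (Measure.map (fun t => r + γ * t) ν₁)
        (Measure.map (fun t => r + γ * t) ν₂)) ^ 2
      = γ * (cramerDist ν₁ ν₂) ^ 2 := by
  simpa only [abs_of_pos hγ0] using
    cramerDist_affine_pushforward_general r γ ν₁ ν₂ (by simp only [measure_univ])

end
end
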